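/- Let ρ and ρ' be two-qubit density matrices, and let λ and λ' be ordered weight vectors such that: if ρ is entangled then ρ is SLOCC equivalent to ρ_BD(λ), and if ρ' is entangled then ρ' is SLOCC equivalent to ρ_BD(λ'). Then ρ can be transformed to ρ' by SLOCC if and only if either (1) ρ' is separable, or (2) ρ and ρ' are both entangled and λ1 ≥ λ1', (1−2λ2)·(λ3'+λ4') ≥ (1−2λ2')·(λ3+λ4), and (1−2λ2−2λ3)·λ4' ≥ (1−2λ2'−2λ3')·λ4. -/

import Mathlib

open Matrix Complex
open scoped Kronecker ComplexOrder

noncomputable section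
namespace Paper

abbrev Q2 := Fin 2 × Fin 2
abbrev M4 := Matrix Q2 Q2 ℂ
abbrev M16 := Matrix (Q2 × Q2) (Q2 × Q2) ℂ

/-- `1/√2` as a complex number. -/
def invSqrt2 : ℂ := ((Real.sqrt 2)⁻¹ : ℝ)

/-- The four Bell states `|Φ₁⟩,…,|Φ₄⟩` as vectors in `ℂ²⊗ℂ²`
(product basis indexed by `Fin 2 × Fin 2`). -/
def bell : Fin 4 → Q2 → ℂ :=
  ![fun p => !![invSqrt2, 0; 0, invSqrt2] p.1 p.2,
    fun p => !![invSqrt2, 0; 0, -invSqrt2] p.1 p.2,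
    fun p => !![0, invSqrt2; invSqrt2, 0] p.1 p.2,
    fun p => !![0, invSqrt2; -invSqrt2, 0] p.1 p.2]

/-- The Bell projectors `Π_i = |Φ_i⟩⟨Φ_i|`. -/
def BellProj (i : Fin 4) : M4 := vecMulVec (bell i) (star (bell i))

/-- The Pauli matrices `σ_x, σ_y, σ_z`. -/
def pauli : Fin 3 → Matrix (Fin 2) (Fin 2) ℂ :=
  ![!![0, 1; 1, 0], !![0, -I; I, 0], !![1, 0; 0, -1]]

/-- Reindexing `((a',b'),(a'',b'')) ↦ ((a',a''),(b',b''))`. -/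
def swapMid : (Q2 × Q2) ≃ (Q2 × Q2) where
  toFun p := ((p.1.1, p.2.1), (p.1.2, p.2.2))
  invFun p := ((p.1.1, p.2.1), (p.1.2, p.2.2))
  left_inv _ := rfl
  right_inv _ := rfl

/-- The rank-one matrix `x x†`. -/
def pureMat {d : Type*} (x : d → ℂ) : Matrix d d ℂ := vecMulVec x (star x)

/-- Separability of a 16×16 four-qubit matrix (qubit order A',B',A'',B'')
across the partition A = (A',A''), B = (B',B''). -/
def SepAB (ρ : M16) : Prop :=
  ∃ (n : ℕ) (x y : Fin n → Q2 → ℂ),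
    (Matrix.reindex swapMid swapMid ρ) = ∑ k, (pureMat (x k)) ⊗ₖ (pureMat (y k))


/-- `ρ` can be transformed to `ρ'` by SLOCC: `ρ' = c·Σ_k (A_k⊗B_k) ρ (A_k⊗B_k)†`
for finitely many local Kraus pairs and some `c > 0`. -/
def SLOCCto (ρ ρ' : M4) : Prop :=
  ∃ (N : ℕ) (A B : Fin N → Matrix (Fin 2) (Fin 2) ℂ) (c : ℝ),
    0 < c ∧ ρ' = (c : ℂ) • ∑ k, (A k ⊗ₖ B k) * ρ * (A k ⊗ₖ B k)ᴴ

/-- `ρ` and `ρ'` are SLOCC equivalent. -/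
def SLOCCequiv (ρ ρ' : M4) : Prop := SLOCCto ρ ρ' ∧ SLOCCto ρ' ρ

/-- The Bell-diagonal state with weight vector `l`. -/
def rhoBD (l : Fin 4 → ℝ) : M4 := ∑ i, (l i : ℂ) • BellProj i

/-- `l` is a weight vector: nonnegative entries summing to `1`. -/
def IsWeight (l : Fin 4 → ℝ) : Prop := (∀ i, 0 ≤ l i) ∧ ∑ i, l i = 1

/-- `l` is ordered: `λ₁ ≥ λ₂ ≥ λ₃ ≥ λ₄`. -/
def IsOrdered (l : Fin 4 → ℝ) : Prop := l 1 ≤ l 0 ∧ l 2 ≤ l 1 ∧ l 3 ≤ l 2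

/-- A two-qubit density matrix. -/
def IsDensity (ρ : M4) : Prop := ρ.PosSemidef ∧ ρ.trace = 1

/-- Separability of a two-qubit matrix. -/
def Sep2 (ρ : M4) : Prop :=
  ∃ (N : ℕ) (x y : Fin N → Fin 2 → ℂ),
    ρ = ∑ k, (pureMat (x k)) ⊗ₖ (pureMat (y k))


/-! ### Complex orthogonality facts -/

lemma L0 (u0 u1 u2 u3 D : ℂ) (h : u0 * u0 + u1 * u1 + u2 * u2 + u3 * u3 = D) :
    ‖D‖ ≤ ‖u0‖^2 + ‖u1‖^2 + ‖u2‖^2 + ‖u3‖^2 := by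
  rw [← h]
  calc _ ≤ ‖u0 * u0‖ + ‖u1 * u1‖ + ‖u2 * u2‖ + ‖u3 * u3‖ := norm_add₄_le
    _ = _ := by simp only [norm_mul]; ring

lemma L1 (u0 u1 u2 u3 D : ℂ) (h : u0 * u0 + u1 * u1 + u2 * u2 + u3 * u3 = D) :
    ‖u0‖^2 ≤ ‖u1‖^2 + ‖u2‖^2 + ‖u3‖^2 + ‖D‖ := by
  have h2 : u0 * u0 = D + -(u1 * u1) + -(u2 * u2) + -(u3 * u3) := by rw [← h]; ring
  calc ‖u0‖^2 = ‖u0 * u0‖ := by simp only [norm_mul]; ring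
    _ ≤ ‖D‖ + ‖-(u1 * u1)‖ + ‖-(u2 * u2)‖ + ‖-(u3 * u3)‖ := by
      rw [h2]; exact norm_add₄_le
    _ = _ := by simp only [norm_mul, norm_neg]; ring

lemma par (u v : ℂ) : ‖u + I * v‖^2 + ‖u - I * v‖^2 = 2 * (‖u‖^2 + ‖v‖^2) := by
  simp only [← Complex.normSq_eq_norm_sq, Complex.normSq_apply]
  simp
  ring

lemma L2 (u0 u1 u2 u3 v0 v1 v2 v3 D : ℂ)
    (hu : u0 * u0 + u1 * u1 + u2 * u2 + u3 * u3 = D)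
    (hv : v0 * v0 + v1 * v1 + v2 * v2 + v3 * v3 = D)
    (huv : u0 * v0 + u1 * v1 + u2 * v2 + u3 * v3 = 0) :
    ‖u0‖^2 + ‖v0‖^2 ≤ ‖u1‖^2 + ‖v1‖^2 + (‖u2‖^2 + ‖v2‖^2) + (‖u3‖^2 + ‖v3‖^2) := by
  have hI : I * I = -1 := Complex.I_mul_I
  have a := L1 (u0 + I * v0) (u1 + I * v1) (u2 + I * v2) (u3 + I * v3) 0
    (by linear_combination hu - hv + 2 * I * huv + (v0 * v0 + v1 * v1 + v2 * v2 + v3 * v3) * hI)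
  have b := L1 (u0 - I * v0) (u1 - I * v1) (u2 - I * v2) (u3 - I * v3) 0
    (by linear_combination hu - hv - 2 * I * huv + (v0 * v0 + v1 * v1 + v2 * v2 + v3 * v3) * hI)
  have p0 := par u0 v0
  have p1 := par u1 v1
  have p2 := par u2 v2
  have p3 := par u3 v3
  rw [norm_zero] at a b
  linarith

lemma cs3 (a b c x y z : ℂ) :
    ‖a * x + b * y + c * z‖^2 ≤ (‖a‖^2 + ‖b‖^2 + ‖c‖^2) * (‖x‖^2 + ‖y‖^2 + ‖z‖^2) := by
  have h : ‖a * x + b * y + c * z‖ ≤ ‖a‖ * ‖x‖ + ‖b‖ * ‖y‖ + ‖c‖ * ‖z‖ := by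
    simpa only [norm_mul] using (norm_add₃_le : ‖a * x + b * y + c * z‖ ≤ _)
  have h2 := pow_le_pow_left₀ (norm_nonneg _) h 2
  nlinarith [sq_nonneg (‖a‖ * ‖y‖ - ‖b‖ * ‖x‖), sq_nonneg (‖a‖ * ‖z‖ - ‖c‖ * ‖x‖),
    sq_nonneg (‖b‖ * ‖z‖ - ‖c‖ * ‖y‖)]

lemma cs2 (a b x y : ℂ) :
    ‖a * x - b * y‖^2 ≤ (‖a‖^2 + ‖b‖^2) * (‖x‖^2 + ‖y‖^2) := by
  have := cs3 a (-b) 0 x y 0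
  simpa [sub_eq_add_neg] using this

lemma L3 (u0 u1 u2 u3 v0 v1 v2 v3 D : ℂ)
    (hu : u0 * u0 + u1 * u1 + u2 * u2 + u3 * u3 = D)
    (hv : v0 * v0 + v1 * v1 + v2 * v2 + v3 * v3 = D)
    (huv : u0 * v0 + u1 * v1 + u2 * v2 + u3 * v3 = 0) :
    ‖D‖ ≤ ‖u1‖^2 + ‖v1‖^2 + (‖u2‖^2 + ‖v2‖^2) + (‖u3‖^2 + ‖v3‖^2) := by
  have e1 : u1 * (v0 * u1 - u0 * v1) + u2 * (v0 * u2 - u0 * v2) + u3 * (v0 * u3 - u0 * v3)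
      = D * v0 := by linear_combination v0 * hu - u0 * huv
  have e2 : v1 * (v0 * u1 - u0 * v1) + v2 * (v0 * u2 - u0 * v2) + v3 * (v0 * u3 - u0 * v3)
      = -(D * u0) := by linear_combination v0 * huv - u0 * hv
  have c1 := cs3 u1 u2 u3 (v0 * u1 - u0 * v1) (v0 * u2 - u0 * v2) (v0 * u3 - u0 * v3)
  have c2 := cs3 v1 v2 v3 (v0 * u1 - u0 * v1) (v0 * u2 - u0 * v2) (v0 * u3 - u0 * v3)
  rw [e1, norm_mul] at c1
  rw [e2, norm_neg, norm_mul] at c2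
  have d1 := cs2 v0 u0 u1 v1
  have d2 := cs2 v0 u0 u2 v2
  have d3 := cs2 v0 u0 u3 v3
  set F := ‖u1‖^2 + ‖v1‖^2 + (‖u2‖^2 + ‖v2‖^2) + (‖u3‖^2 + ‖v3‖^2) with hF
  set Y := ‖v0 * u1 - u0 * v1‖^2 + ‖v0 * u2 - u0 * v2‖^2 + ‖v0 * u3 - u0 * v3‖^2 with hY
  set w := ‖v0‖^2 + ‖u0‖^2 with hw
  have hFn : 0 ≤ F := by positivity
  have hYF : Y ≤ w * F := by rw [hY, hF]; linarith
  have k : ‖D‖^2 * w ≤ F * Y := by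
    have : F = (‖u1‖^2 + ‖u2‖^2 + ‖u3‖^2) + (‖v1‖^2 + ‖v2‖^2 + ‖v3‖^2) := by rw [hF]; ring
    rw [this, hw]; linarith
  have k2 : ‖D‖^2 * w ≤ F^2 * w := by nlinarith [mul_le_mul_of_nonneg_left hYF hFn]
  have hwn : 0 ≤ w := by positivity
  rcases hwn.lt_or_eq with h | h
  · have := le_of_mul_le_mul_right k2 h
    exact (sq_le_sq₀ (norm_nonneg _) hFn).1 this
  · have h0 : u0 = 0 := by
      have : ‖u0‖^2 = 0 := by linarith [sq_nonneg ‖u0‖, sq_nonneg ‖v0‖]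
      simpa using this
    have := L0 u0 u1 u2 u3 D hu
    rw [h0, norm_zero] at this
    rw [hF]
    linarith [sq_nonneg ‖v1‖, sq_nonneg ‖v2‖, sq_nonneg ‖v3‖]

/-! ### Bell overlaps -/

lemma iss : invSqrt2 * invSqrt2 = 1 / 2 := by
  unfold invSqrt2
  rw [← Complex.ofReal_mul, ← mul_inv, Real.mul_self_sqrt (by norm_num)]
  norm_num

lemma isstar : (starRingEnd ℂ) invSqrt2 = invSqrt2 := by
  unfold invSqrt2; exact Complex.conj_ofReal _

def ov (A B : Matrix (Fin 2) (Fin 2) ℂ) (j i : Fin 4) : ℂ :=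
  star (bell j) ⬝ᵥ ((A ⊗ₖ B) *ᵥ bell i)

lemma bell_ortho (j i : Fin 4) : star (bell j) ⬝ᵥ bell i = if j = i then 1 else 0 := by
  have := iss
  have h2 : invSqrt2 ^ 2 = 1/2 := by rw [sq, this]
  fin_cases j <;> fin_cases i <;>
    simp [bell, dotProduct, Fintype.sum_prod_type, Fin.sum_univ_two, isstar, this] <;> norm_num

def ovE (A B : Matrix (Fin 2) (Fin 2) ℂ) : Matrix (Fin 4) (Fin 4) ℂ :=
  let a := A 0 0
  let b := A 0 1
  let c := A 1 0
  let d := A 1 1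
  let e := B 0 0
  let f := B 0 1
  let g := B 1 0
  let h := B 1 1
  !![(a*e+b*f+c*g+d*h)/2, (a*e-b*f+c*g-d*h)/2, (a*f+b*e+c*h+d*g)/2, (a*f-b*e+c*h-d*g)/2;
     (a*e+b*f-c*g-d*h)/2, (a*e-b*f-c*g+d*h)/2, (a*f+b*e-c*h-d*g)/2, (a*f-b*e-c*h+d*g)/2;
     (a*g+b*h+c*e+d*f)/2, (a*g-b*h+c*e-d*f)/2, (a*h+b*g+c*f+d*e)/2, (a*h-b*g+c*f-d*e)/2;
     (a*g+b*h-c*e-d*f)/2, (a*g-b*h-c*e+d*f)/2, (a*h+b*g-c*f-d*e)/2, (a*h-b*g-c*f+d*e)/2]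

lemma ov_eq (A B : Matrix (Fin 2) (Fin 2) ℂ) (j i : Fin 4) : ov A B j i = ovE A B j i := by
  have := iss
  fin_cases j <;> fin_cases i <;>
    simp [ov, ovE, bell, dotProduct, mulVec, Fintype.sum_prod_type, Fin.sum_univ_two, isstar] <;>
    grind

/-- sign making the overlaps complex orthogonal -/
def ph : Fin 4 → ℂ := ![1, I, I, 1]

def mg (A B : Matrix (Fin 2) (Fin 2) ℂ) (j i : Fin 4) : ℂ := ph j * star (ph i) * ovE A B j i

lemma mg_norm (A B : Matrix (Fin 2) (Fin 2) ℂ) (j i : Fin 4) : ‖mg A B j i‖ = ‖ov A B j i‖ := by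
  rw [ov_eq]
  fin_cases j <;> fin_cases i <;> simp [mg, ph]

lemma mg_col (A B : Matrix (Fin 2) (Fin 2) ℂ) (i k : Fin 4) :
    mg A B 0 i * mg A B 0 k + mg A B 1 i * mg A B 1 k + mg A B 2 i * mg A B 2 k
      + mg A B 3 i * mg A B 3 k = if i = k then A.det * B.det else 0 := by
  have hI : I * I = -1 := Complex.I_mul_I
  fin_cases i <;> fin_cases k <;> simp [mg, ph, ovE, Matrix.det_fin_two] <;> grind

lemma mg_row (A B : Matrix (Fin 2) (Fin 2) ℂ) (i k : Fin 4) :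
    mg A B i 0 * mg A B k 0 + mg A B i 1 * mg A B k 1 + mg A B i 2 * mg A B k 2
      + mg A B i 3 * mg A B k 3 = if i = k then A.det * B.det else 0 := by
  have hI : I * I = -1 := Complex.I_mul_I
  fin_cases i <;> fin_cases k <;> simp [mg, ph, ovE, Matrix.det_fin_two] <;> grind

def mm (A B : Matrix (Fin 2) (Fin 2) ℂ) (j i : Fin 4) : ℝ := ‖ov A B j i‖^2

lemma mm_nonneg (A B : Matrix (Fin 2) (Fin 2) ℂ) (j i : Fin 4) : 0 ≤ mm A B j i := sq_nonneg _

lemma mm_facts (A B : Matrix (Fin 2) (Fin 2) ℂ) : ∃ δ : ℝ, 0 ≤ δ ∧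
    (mm A B 0 0 ≤ mm A B 1 0 + mm A B 2 0 + mm A B 3 0 + δ) ∧
    (∀ i, i ≠ 0 → mm A B 0 0 + mm A B 0 i ≤
      mm A B 1 0 + mm A B 1 i + (mm A B 2 0 + mm A B 2 i) + (mm A B 3 0 + mm A B 3 i)) ∧
    (∀ i, i ≠ 0 → δ ≤
      mm A B 1 0 + mm A B 1 i + (mm A B 2 0 + mm A B 2 i) + (mm A B 3 0 + mm A B 3 i)) ∧
    (∀ j, δ ≤ mm A B j 0 + mm A B j 1 + mm A B j 2 + mm A B j 3) ∧
    (δ ≤ mm A B 2 2 + mm A B 3 2 + (mm A B 2 1 + mm A B 3 1) + (mm A B 2 0 + mm A B 3 0)) := by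
  have hc := mg_col A B
  have hr := mg_row A B
  refine ⟨‖A.det * B.det‖, norm_nonneg _, ?_, ?_, ?_, ?_, ?_⟩ <;>
    simp only [mm, ← mg_norm]
  · exact L1 _ _ _ _ _ (by simpa using hc 0 0)
  · intro i hi
    exact L2 _ _ _ _ _ _ _ _ _ (by simpa using hc 0 0) (by simpa using hc i i)
      (by simpa [hi.symm] using hc 0 i)
  · intro i hi
    exact L3 (mg A B 0 0) _ _ _ (mg A B 0 i) _ _ _ _ (by simpa using hc 0 0) (by simpa using hc i i)
      (by simpa [hi.symm] using hc 0 i)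
  · intro j
    exact L0 _ _ _ _ _ (by simpa using hr j j)
  · refine L3 (mg A B 2 3) _ _ _ (mg A B 3 3) _ _ _ _ ?_ ?_ ?_
    · have := hr 2 2
      rw [if_pos rfl] at this
      rw [← this]; ring
    · have := hr 3 3
      rw [if_pos rfl] at this
      rw [← this]; ring
    · have := hr 2 3
      rw [if_neg (by decide)] at this
      rw [← this]; ring

/-! ### Cones -/

abbrev M2 := Matrix (Fin 2) (Fin 2) ℂ

lemma closure_range_iff {α : Type} (g : α → M4) (x : M4) :
    x ∈ AddSubmonoid.closure (Set.range g) ↔ ∃ (N : ℕ) (f : Fin N → α), x = ∑ k, g (f k) := by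
  constructor
  · intro h
    induction h using AddSubmonoid.closure_induction with
    | mem x hx =>
      obtain ⟨a, rfl⟩ := hx
      exact ⟨1, fun _ => a, by simp⟩
    | zero => exact ⟨0, Fin.elim0, by simp⟩
    | add x y _ _ hx hy =>
      obtain ⟨N, f, rfl⟩ := hx
      obtain ⟨N', f', rfl⟩ := hy
      exact ⟨N + N', Fin.append f f', by simp [Fin.sum_univ_add]⟩
  · rintro ⟨N, f, rfl⟩
    exact AddSubmonoid.sum_mem _ fun k _ => AddSubmonoid.subset_closure ⟨_, rfl⟩

def cj (M ρ : M4) : M4 := M * ρ * Mᴴ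

def RR (ρ : M4) : AddSubmonoid M4 :=
  AddSubmonoid.closure (Set.range fun p : M2 × M2 => cj (p.1 ⊗ₖ p.2) ρ)

def SS : AddSubmonoid M4 :=
  AddSubmonoid.closure (Set.range fun p : (Fin 2 → ℂ) × (Fin 2 → ℂ) => pureMat p.1 ⊗ₖ pureMat p.2)

lemma sep_iff (σ : M4) : Sep2 σ ↔ σ ∈ SS := by
  rw [SS, closure_range_iff]
  constructor
  · rintro ⟨N, x, y, h⟩
    exact ⟨N, fun k => (x k, y k), h⟩
  · rintro ⟨N, f, h⟩
    exact ⟨N, fun k => (f k).1, fun k => (f k).2, h⟩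

lemma cj_mem (ρ : M4) (A B : M2) : cj (A ⊗ₖ B) ρ ∈ RR ρ :=
  AddSubmonoid.subset_closure ⟨(A, B), rfl⟩

lemma cj_add (M ρ σ : M4) : cj M (ρ + σ) = cj M ρ + cj M σ := by
  simp [cj, Matrix.mul_add, Matrix.add_mul]

lemma cj_zero (M : M4) : cj M 0 = 0 := by simp [cj]

lemma cj_smul (M ρ : M4) (c : ℂ) : cj M (c • ρ) = c • cj M ρ := by simp [cj]

lemma cj_cj (M N ρ : M4) : cj M (cj N ρ) = cj (M * N) ρ := by
  simp [cj, Matrix.conjTranspose_mul, Matrix.mul_assoc]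

lemma sqrt_star (r : ℝ) (hr : 0 ≤ r) : ((√r : ℝ) : ℂ) * star ((√r : ℝ) : ℂ) = (r : ℂ) := by
  rw [Complex.star_def, Complex.conj_ofReal, ← Complex.ofReal_mul, Real.mul_self_sqrt hr]

lemma smul_cj (A B : M2) (ρ : M4) (r : ℝ) (hr : 0 ≤ r) :
    (r : ℂ) • cj (A ⊗ₖ B) ρ = cj ((((√r : ℝ) : ℂ) • A) ⊗ₖ B) ρ := by
  rw [cj, cj, Matrix.smul_kronecker, Matrix.conjTranspose_smul, Matrix.smul_mul, Matrix.smul_mul,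
    Matrix.mul_smul, smul_smul, sqrt_star r hr]

lemma RR_smul {ρ σ : M4} (h : σ ∈ RR ρ) (r : ℝ) (hr : 0 ≤ r) : (r : ℂ) • σ ∈ RR ρ := by
  rw [RR] at h
  induction h using AddSubmonoid.closure_induction with
  | mem x hx =>
    obtain ⟨⟨A, B⟩, rfl⟩ := hx
    simp only
    rw [smul_cj A B ρ r hr]
    exact cj_mem _ _ _
  | zero => simp
  | add x y _ _ hx hy => rw [smul_add]; exact add_mem hx hy

lemma RR_trans {ρ σ τ : M4} (h : σ ∈ RR ρ) (h2 : τ ∈ RR σ) : τ ∈ RR ρ := by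
  have key : ∀ A B : M2, cj (A ⊗ₖ B) σ ∈ RR ρ := by
    intro A B
    clear h2
    rw [RR] at h
    induction h using AddSubmonoid.closure_induction with
    | mem x hx =>
      obtain ⟨⟨A', B'⟩, rfl⟩ := hx
      simp only
      rw [cj_cj, ← Matrix.mul_kronecker_mul]
      exact cj_mem _ _ _
    | zero => rw [cj_zero]; exact zero_mem _
    | add x y hx hy hx' hy' =>
      rw [cj_add]
      exact add_mem hx' hy'
  rw [RR] at h2
  exact (AddSubmonoid.closure_le.2 (by rintro _ ⟨p, rfl⟩; exact key _ _)) h2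

lemma slocc_iff (ρ σ : M4) : SLOCCto ρ σ ↔ σ ∈ RR ρ := by
  constructor
  · rintro ⟨N, A, B, c, hc, rfl⟩
    refine RR_smul ?_ c hc.le
    exact AddSubmonoid.sum_mem _ fun k _ => cj_mem _ _ _
  · intro h
    rw [RR, closure_range_iff] at h
    obtain ⟨N, f, rfl⟩ := h
    exact ⟨N, fun k => (f k).1, fun k => (f k).2, 1, one_pos, by simp [cj]⟩

lemma pure_eq (x : Q2 → ℂ) (M : M4) : cj M (pureMat x) = pureMat (M *ᵥ x) := by
  rw [cj, pureMat, pureMat, Matrix.mul_vecMulVec, Matrix.vecMulVec_mul, Matrix.star_mulVec]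

lemma kr_cj (A B X Y : M2) : cj (A ⊗ₖ B) (X ⊗ₖ Y) = (A * X * Aᴴ) ⊗ₖ (B * Y * Bᴴ) := by
  rw [cj, Matrix.conjTranspose_kronecker, ← Matrix.mul_kronecker_mul, ← Matrix.mul_kronecker_mul]

lemma pure2_eq (x : Fin 2 → ℂ) (M : M2) : M * (pureMat x) * Mᴴ = pureMat (M *ᵥ x) := by
  rw [pureMat, pureMat, Matrix.mul_vecMulVec, Matrix.vecMulVec_mul, Matrix.star_mulVec]

lemma RR_le_SS {ρ : M4} (h : ρ ∈ SS) : RR ρ ≤ SS := by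
  refine AddSubmonoid.closure_le.2 ?_
  rintro _ ⟨⟨A, B⟩, rfl⟩
  simp only [SetLike.mem_coe]
  rw [SS] at h
  induction h using AddSubmonoid.closure_induction with
  | mem x hx =>
    obtain ⟨⟨x, y⟩, rfl⟩ := hx
    simp only
    rw [kr_cj, pure2_eq, pure2_eq]
    exact AddSubmonoid.subset_closure ⟨(_, _), rfl⟩
  | zero => rw [cj_zero]; exact zero_mem _
  | add x y _ _ hx hy => rw [cj_add]; exact add_mem hx hy

lemma SS_le_RR {ρ : M4} (h : IsDensity ρ) : SS ≤ RR ρ := by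
  obtain ⟨hp, ht⟩ := h
  have hd : ∀ p, 0 ≤ ρ p p := fun p => hp.diag_nonneg
  obtain ⟨p, hp0⟩ : ∃ p, ρ p p ≠ 0 := by
    by_contra! hc
    rw [Matrix.trace] at ht
    simp [hc] at ht
  obtain ⟨r, hr, hrp⟩ : ∃ r : ℝ, 0 < r ∧ ρ p p = r := by
    have h1 := hd p
    rw [Complex.le_def] at h1
    have him : (ρ p p).im = 0 := by simpa using h1.2.symm
    have e : ρ p p = ((ρ p p).re : ℂ) := by apply Complex.ext <;> simp [him]
    refine ⟨(ρ p p).re, lt_of_le_of_ne (by simpa using h1.1) ?_, e⟩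
    intro h0
    rw [← h0] at e
    exact hp0 (by simpa using e)
  refine AddSubmonoid.closure_le.2 ?_
  rintro _ ⟨⟨x, y⟩, rfl⟩
  simp only [SetLike.mem_coe]
  have key : cj (vecMulVec x (Pi.single p.1 1) ⊗ₖ vecMulVec y (Pi.single p.2 1)) ρ
      = (r : ℂ) • (pureMat x ⊗ₖ pureMat y) := by
    rw [← hrp]
    have e : vecMulVec x (Pi.single p.1 1) ⊗ₖ vecMulVec y (Pi.single p.2 1)
        = vecMulVec (fun q : Q2 => x q.1 * y q.2) (Pi.single p 1) := by
      ext ⟨i, i'⟩ ⟨j, j'⟩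
      obtain ⟨a, b⟩ := p
      simp only [Matrix.kroneckerMap_apply, Matrix.vecMulVec_apply, Pi.single_apply, Prod.mk.injEq]
      by_cases h1 : j = a <;> by_cases h2 : j' = b <;> simp [h1, h2]
    rw [e]
    ext ⟨i, i'⟩ ⟨j, j'⟩
    simp [cj, Matrix.mul_apply, Matrix.vecMulVec_apply, pureMat, Pi.single_apply]
    ring
  have := RR_smul (cj_mem ρ (vecMulVec x (Pi.single p.1 1)) (vecMulVec y (Pi.single p.2 1)))
    r⁻¹ (inv_nonneg.2 hr.le)
  rw [key, smul_smul] at this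
  have h1 : ((r⁻¹ : ℝ) : ℂ) * (r : ℂ) = 1 := by
    rw [← Complex.ofReal_mul, inv_mul_cancel₀ hr.ne']; simp
  rwa [h1, one_smul] at this

/-! ### Bell-diagonal manipulations -/

lemma rhoBD_add (l m : Fin 4 → ℝ) : rhoBD (l + m) = rhoBD l + rhoBD m := by
  simp [rhoBD, add_smul, Finset.sum_add_distrib]

lemma rhoBD_smul (r : ℝ) (m : Fin 4 → ℝ) : rhoBD (r • m) = (r : ℂ) • rhoBD m := by
  simp [rhoBD, mul_smul, Finset.smul_sum]

lemma pure_smul (c : ℂ) (x : Q2 → ℂ) : pureMat (c • x) = (c * star c) • pureMat x := by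
  ext i j
  simp [pureMat, vecMulVec_apply]
  ring

lemma cj_rhoBD (M : M4) (l : Fin 4 → ℝ) :
    cj M (rhoBD l) = ∑ i, (l i : ℂ) • pureMat (M *ᵥ bell i) := by
  simp only [Fin.sum_univ_four, rhoBD, cj_add, cj_smul]
  simp only [← pure_eq]
  rfl

lemma perm_aux (A B : M2) (π : Equiv.Perm (Fin 4)) (κ : Fin 4 → ℂ) (K : ℝ) (hK : 0 < K)
    (hκ : ∀ i, κ i * star (κ i) = K) (h : ∀ i, (A ⊗ₖ B) *ᵥ bell i = κ i • bell (π i))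
    (l : Fin 4 → ℝ) : rhoBD l ∈ RR (rhoBD (l ∘ π)) := by
  have e : cj (A ⊗ₖ B) (rhoBD (l ∘ π)) = (K : ℂ) • rhoBD l := by
    rw [cj_rhoBD, rhoBD, ← Equiv.sum_comp π (fun i => (l i : ℂ) • BellProj i), Finset.smul_sum]
    refine Finset.sum_congr rfl fun i _ => ?_
    rw [h, pure_smul, hκ, smul_smul, smul_smul, mul_comm]
    rfl
  have := RR_smul (cj_mem (rhoBD (l ∘ π)) A B) K⁻¹ (inv_nonneg.2 hK.le)
  rw [e, smul_smul] at this
  have h1 : ((K⁻¹ : ℝ) : ℂ) * (K : ℂ) = 1 := by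
    rw [← Complex.ofReal_mul, inv_mul_cancel₀ hK.ne']; simp
  rwa [h1, one_smul] at this

lemma swap23 (a b c d : ℝ) : rhoBD ![a, b, c, d] ∈ RR (rhoBD ![a, c, b, d]) := by
  have := perm_aux !![1, 1; 1, -1] !![1, 1; 1, -1] (Equiv.swap 1 2) ![2, 2, 2, -2] 4 (by norm_num)
    (by intro i; fin_cases i <;> norm_num)
    (by
      intro i
      ext ⟨p, q⟩
      fin_cases i <;> fin_cases p <;> fin_cases q <;>
        simp [bell, mulVec, dotProduct, Fintype.sum_prod_type, Equiv.swap_apply_def] <;> ring)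
    ![a, b, c, d]
  convert this using 3
  ext i; fin_cases i <;> simp [Equiv.swap_apply_def]

lemma swap34 (a b c d : ℝ) : rhoBD ![a, b, c, d] ∈ RR (rhoBD ![a, b, d, c]) := by
  have := perm_aux !![1, 0; 0, I] !![1, 0; 0, -I] (Equiv.swap 2 3) ![1, 1, -I, -I] 1 (by norm_num)
    (by intro i; fin_cases i <;> simp)
    (by
      intro i
      ext ⟨p, q⟩
      fin_cases i <;> fin_cases p <;> fin_cases q <;>
        simp [bell, mulVec, dotProduct, Fintype.sum_prod_type, Equiv.swap_apply_def])
    ![a, b, c, d]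
  convert this using 3
  ext i; fin_cases i <;> simp [Equiv.swap_apply_def]

lemma swap12 (a b c d : ℝ) : rhoBD ![a, b, c, d] ∈ RR (rhoBD ![b, a, c, d]) := by
  have := perm_aux !![1, 0; 0, I] !![1, 0; 0, I] (Equiv.swap 0 1) ![1, 1, I, I] 1 (by norm_num)
    (by intro i; fin_cases i <;> simp)
    (by
      intro i
      ext ⟨p, q⟩
      fin_cases i <;> fin_cases p <;> fin_cases q <;>
        simp [bell, mulVec, dotProduct, Fintype.sum_prod_type, Equiv.swap_apply_def])
    ![a, b, c, d]
  convert this using 3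
  ext i; fin_cases i <;> simp [Equiv.swap_apply_def]

lemma pure_kr_apply (x y : Fin 2 → ℂ) (i i' j j' : Fin 2) :
    (pureMat x ⊗ₖ pureMat y) (i, i') (j, j') = x i * star (x j) * (y i' * star (y j')) := rfl

lemma sep12 : rhoBD ![1, 1, 0, 0] ∈ SS := by
  have h1 : (pureMat ![1, 0] ⊗ₖ pureMat ![1, 0] : M4) ∈ SS :=
    AddSubmonoid.subset_closure ⟨(_, _), rfl⟩
  have h2 : (pureMat ![0, 1] ⊗ₖ pureMat ![0, 1] : M4) ∈ SS :=
    AddSubmonoid.subset_closure ⟨(_, _), rfl⟩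
  have := add_mem h1 h2
  convert this using 1
  have hs := iss
  ext ⟨i, i'⟩ ⟨j, j'⟩
  rw [Matrix.add_apply, pure_kr_apply, pure_kr_apply]
  fin_cases i <;> fin_cases i' <;> fin_cases j <;> fin_cases j' <;>
    simp [rhoBD, BellProj, Fin.sum_univ_four, bell, pureMat, vecMulVec_apply, isstar, hs] <;>
    norm_num

lemma sep13 : rhoBD ![1, 0, 1, 0] ∈ SS := RR_le_SS sep12 (swap23 _ _ _ _)
lemma sep14 : rhoBD ![1, 0, 0, 1] ∈ SS := RR_le_SS sep13 (swap34 _ _ _ _)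
lemma sep23 : rhoBD ![0, 1, 1, 0] ∈ SS := RR_le_SS sep13 (swap12 _ _ _ _)

lemma SS_smul {σ : M4} (h : σ ∈ SS) (r : ℝ) (hr : 0 ≤ r) : (r : ℂ) • σ ∈ SS :=
  RR_le_SS h (RR_smul (by simpa [cj] using cj_mem σ 1 1) r hr)

lemma sep_small (l : Fin 4 → ℝ) (hw : IsWeight l) (ho : IsOrdered l) (h : l 0 ≤ 1/2) :
    rhoBD l ∈ SS := by
  obtain ⟨hn, hs⟩ := hw
  obtain ⟨o1, o2, o3⟩ := ho
  rw [Fin.sum_univ_four] at hs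
  have e : l = ((l 0 + l 1 - l 2 - l 3)/2) • ![1, 1, 0, 0] + ((l 0 + l 2 - l 1 - l 3)/2) • ![1, 0, 1, 0]
      + (l 3) • ![1, 0, 0, 1] + ((l 1 + l 2 + l 3 - l 0)/2) • ![0, 1, 1, 0] := by
    ext i; fin_cases i <;> simp <;> ring
  rw [e]
  simp only [rhoBD_add, rhoBD_smul]
  exact add_mem (add_mem (add_mem (SS_smul sep12 _ (by linarith)) (SS_smul sep13 _ (by linarith)))
    (SS_smul sep14 _ (hn 3))) (SS_smul sep23 _ (by linarith))

/-! ### Necessity -/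

def DD (j : Fin 4) (X : M4) : ℂ := star (bell j) ⬝ᵥ (X *ᵥ bell j)

lemma DD_add (j : Fin 4) (X Y : M4) : DD j (X + Y) = DD j X + DD j Y := by
  simp [DD, Matrix.add_mulVec]

lemma DD_smul (j : Fin 4) (c : ℂ) (X : M4) : DD j (c • X) = c * DD j X := by
  simp [DD, Matrix.smul_mulVec]

lemma DD_zero (j : Fin 4) : DD j 0 = 0 := by
  simp [DD]

lemma DD_pure (j : Fin 4) (x : Q2 → ℂ) :
    DD j (pureMat x) = ((‖star (bell j) ⬝ᵥ x‖^2 : ℝ) : ℂ) := by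
  rw [DD, pureMat, Matrix.vecMulVec_mulVec, dotProduct_smul]
  have : star x ⬝ᵥ bell j = star (star (bell j) ⬝ᵥ x) := by
    rw [Matrix.star_dotProduct]
  rw [this, op_smul_eq_smul, smul_eq_mul, mul_comm, Complex.star_def, Complex.mul_conj,
    Complex.normSq_eq_norm_sq]

lemma DD_cj (j : Fin 4) (A B : M2) (l : Fin 4 → ℝ) :
    DD j (cj (A ⊗ₖ B) (rhoBD l)) = ((∑ i, l i * mm A B j i : ℝ) : ℂ) := by
  rw [cj_rhoBD]
  simp only [Fin.sum_univ_four, DD_add, DD_smul, DD_pure]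
  simp only [mm, ov]
  push_cast
  rfl

lemma DD_rho (j : Fin 4) (l : Fin 4 → ℝ) : DD j (rhoBD l) = (l j : ℂ) := by
  have : rhoBD l = ∑ i, (l i : ℂ) • pureMat (bell i) := rfl
  rw [this]
  simp only [Fin.sum_univ_four, DD_add, DD_smul, DD_pure, bell_ortho]
  fin_cases j <;> simp

lemma mono_fun (f l l' : Fin 4 → ℝ)
    (hf : ∀ A B : M2, 0 ≤ ∑ j, f j * ∑ i, l i * mm A B j i)
    (h : rhoBD l' ∈ RR (rhoBD l)) : 0 ≤ ∑ j, f j * l' j := by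
  have key : ∀ σ ∈ RR (rhoBD l), 0 ≤ ∑ j, f j * (DD j σ).re := by
    intro σ hσ
    rw [RR] at hσ
    induction hσ using AddSubmonoid.closure_induction with
    | mem x hx =>
      obtain ⟨⟨A, B⟩, rfl⟩ := hx
      simp only [DD_cj, Complex.ofReal_re]
      exact hf A B
    | zero => simp [DD_zero]
    | add x y _ _ hx hy =>
      simp only [DD_add, Complex.add_re, mul_add, Finset.sum_add_distrib]
      exact add_nonneg hx hy
  have := key _ h
  simpa only [DD_rho, Complex.ofReal_re] using this

lemma nec (l l' : Fin 4 → ℝ) (hw : IsWeight l) (hw' : IsWeight l')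
    (ho : IsOrdered l) (h0 : 1/2 < l 0) (h : rhoBD l' ∈ RR (rhoBD l)) :
    l' 0 ≤ l 0 ∧
      (1 - 2 * l' 1) * (l 2 + l 3) ≤ (1 - 2 * l 1) * (l' 2 + l' 3) ∧
      (1 - 2 * l' 1 - 2 * l' 2) * l 3 ≤ (1 - 2 * l 1 - 2 * l 2) * l' 3 := by
  obtain ⟨hn, hs⟩ := hw
  obtain ⟨hn', hs'⟩ := hw'
  obtain ⟨o1, o2, o3⟩ := ho
  rw [Fin.sum_univ_four] at hs hs'
  have n1 := hn 1
  have n2 := hn 2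
  have n3 := hn 3
  have hK : 0 ≤ l 0 - l 1 - l 2 - l 3 := by linarith
  have p := mono_fun ![-(l 1 + l 2 + l 3), l 0, l 0, l 0] l l' (by
    intro A B
    obtain ⟨δ, hδ, f1, f2, f3, f4, f5⟩ := mm_facts A B
    have g1 := f2 1 (by decide)
    have g2 := f2 2 (by decide)
    have g3 := f2 3 (by decide)
    have k1 := f3 1 (by decide)
    have k2 := f3 2 (by decide)
    have k3 := f3 3 (by decide)
    have q := mm_nonneg A B
    have s : 0 ≤ l 1 + l 2 + l 3 := by linarith
    simp [Fin.sum_univ_four]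
    generalize mm A B = m at *
    have z1 := mul_nonneg (mul_nonneg s hK) (sub_nonneg.2 f1)
    have z2 := mul_nonneg (mul_nonneg s n1) (sub_nonneg.2 g1)
    have z3 := mul_nonneg (mul_nonneg s n2) (sub_nonneg.2 g2)
    have z4 := mul_nonneg (mul_nonneg s n3) (sub_nonneg.2 g3)
    have z5 := mul_nonneg (mul_nonneg hK n1) (sub_nonneg.2 k1)
    have z6 := mul_nonneg (mul_nonneg hK n2) (sub_nonneg.2 k2)
    have z7 := mul_nonneg (mul_nonneg hK n3) (sub_nonneg.2 k3)
    have z8 := mul_nonneg (mul_nonneg hK hK) (add_nonneg (add_nonneg (q 1 0) (q 2 0)) (q 3 0))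
    linarith)
  have p2 := mono_fun ![-(l 2 + l 3), l 2 + l 3, l 0 - l 1, l 0 - l 1] l l' (by
    intro A B
    obtain ⟨δ, hδ, f1, f2, f3, f4, f5⟩ := mm_facts A B
    have g1 := f2 1 (by decide)
    have g2 := f2 2 (by decide)
    have g3 := f2 3 (by decide)
    have k2 := f4 2
    have k3 := f4 3
    have q := mm_nonneg A B
    have s : 0 ≤ l 2 + l 3 := by linarith
    simp [Fin.sum_univ_four]
    generalize mm A B = m at *
    have z1 := mul_nonneg (mul_nonneg s hK) (sub_nonneg.2 f1)
    have z2 := mul_nonneg (mul_nonneg s n1) (sub_nonneg.2 g1)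
    have z3 := mul_nonneg (mul_nonneg s n2) (sub_nonneg.2 g2)
    have z4 := mul_nonneg (mul_nonneg s n3) (sub_nonneg.2 g3)
    have z5 := mul_nonneg (mul_nonneg hK (sub_nonneg.2 o3)) (sub_nonneg.2 f5)
    have z6 := mul_nonneg (mul_nonneg hK n3) (sub_nonneg.2 k2)
    have z7 := mul_nonneg (mul_nonneg hK n3) (sub_nonneg.2 k3)
    have z8 := mul_nonneg (mul_nonneg hK (sub_nonneg.2 o2)) (add_nonneg (q 2 1) (q 3 1))
    have hT : 0 ≤ l 0 - l 2 := by linarith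
    have z9 := mul_nonneg (mul_nonneg hK hT) (add_nonneg (q 2 0) (q 3 0))
    linarith)
  have p3 := mono_fun ![-(l 3), l 3, l 3, l 0 - l 1 - l 2] l l' (by
    intro A B
    obtain ⟨δ, hδ, f1, f2, f3, f4, f5⟩ := mm_facts A B
    have g1 := f2 1 (by decide)
    have g2 := f2 2 (by decide)
    have g3 := f2 3 (by decide)
    have k3 := f4 3
    have q := mm_nonneg A B
    simp [Fin.sum_univ_four]
    generalize mm A B = m at *
    have z1 := mul_nonneg (mul_nonneg n3 hK) (sub_nonneg.2 f1)
    have z2 := mul_nonneg (mul_nonneg n3 n1) (sub_nonneg.2 g1)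
    have z3 := mul_nonneg (mul_nonneg n3 n2) (sub_nonneg.2 g2)
    have z4 := mul_nonneg (mul_nonneg n3 n3) (sub_nonneg.2 g3)
    have z5 := mul_nonneg (mul_nonneg hK n3) (sub_nonneg.2 k3)
    have h1 : 0 ≤ l 1 - l 3 := by linarith
    have h2 : 0 ≤ l 2 - l 3 := by linarith
    have h0 : 0 ≤ l 0 - l 3 := by linarith
    have z6 := mul_nonneg (mul_nonneg hK h1) (q 3 1)
    have z7 := mul_nonneg (mul_nonneg hK h2) (q 3 2)
    have z8 := mul_nonneg (mul_nonneg hK h0) (q 3 0)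
    linarith)
  replace p := p h
  replace p2 := p2 h
  replace p3 := p3 h
  simp [Fin.sum_univ_four] at p p2 p3
  have e0 : l 0 = 1 - l 1 - l 2 - l 3 := by linarith
  have e0' : l' 0 = 1 - l' 1 - l' 2 - l' 3 := by linarith
  rw [e0, e0'] at p p2 p3 ⊢
  refine ⟨?_, ?_, ?_⟩ <;> linarith

/-! ### Sufficiency -/

lemma maj (G : ℝ → ℝ → ℝ → Prop)
    (s12 : ∀ x y z, G x y z → G y x z) (s23 : ∀ x y z, G x y z → G x z y)
    (cv : ∀ x y z x' y' z' s, G x y z → G x' y' z' → 0 ≤ s → s ≤ 1 →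
      G ((1 - s) * x + s * x') ((1 - s) * y + s * y') ((1 - s) * z + s * z'))
    (up : ∀ x y z x' y' z', G x y z → x ≤ x' → y ≤ y' → z ≤ z' → G x' y' z')
    (w1 w2 w3 x1 x2 x3 : ℝ) (hx1 : x2 ≤ x1) (hx2 : x3 ≤ x2)
    (h3 : w3 ≤ x3) (h2 : w2 + w3 ≤ x2 + x3) (h1 : w1 + w2 + w3 ≤ x1 + x2 + x3)
    (h : G w1 w2 w3) : G x1 x2 x3 := by
  have T12 : ∀ x y z α, G x y z → 0 ≤ α → α ≤ x - y → G (x - α) (y + α) z := by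
    intro x y z α hG h0 hα
    rcases (h0.trans hα).eq_or_lt with h | h
    · have : α = 0 := by linarith
      subst this; simpa using hG
    · have := cv _ _ _ _ _ _ (α / (x - y)) hG (s12 _ _ _ hG) (by positivity) ((div_le_one h).2 hα)
      convert this using 1 <;> field_simp <;> ring
  have T13 : ∀ x y z α, G x y z → 0 ≤ α → α ≤ x - z → G (x - α) y (z + α) := by
    intro x y z α hG h0 hα
    exact s23 _ _ _ (T12 _ _ _ _ (s23 _ _ _ hG) h0 hα)
  have T23 : ∀ x y z α, G x y z → 0 ≤ α → α ≤ y - z → G x (y - α) (z + α) := by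
    intro x y z α hG h0 hα
    exact s12 _ _ _ (T13 _ _ _ _ (s12 _ _ _ hG) h0 hα)
  rcases le_total w2 x2 with c | c
  · rcases le_total w1 x1 with d | d
    · exact up _ _ _ _ _ _ h d c h3
    · -- move α to slot 2, the remainder to slot 3
      rcases le_total (w1 - x1) (x2 - w2) with e | e
      · exact up _ _ _ _ _ _ (T12 _ _ _ (w1 - x1) h (by linarith) (by linarith))
          (by linarith) (by linarith) h3
      · have a := T12 _ _ _ (x2 - w2) h (by linarith) (by linarith)
        have b := T13 _ _ _ (w1 - x1 - (x2 - w2)) a (by linarith) (by linarith)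
        exact up _ _ _ _ _ _ b (by linarith) (by linarith) (by linarith)
  · have a := T23 _ _ _ (w2 - x2) h (by linarith) (by linarith)
    rcases le_total w1 x1 with d | d
    · exact up _ _ _ _ _ _ a d (by linarith) (by linarith)
    · have b := T13 _ _ _ (w1 - x1) a (by linarith) (by linarith)
      exact up _ _ _ _ _ _ b (by linarith) (by linarith) (by linarith)

lemma suf (ρ : M4) (hρ : IsDensity ρ) (l l' : Fin 4 → ℝ) (hw : IsWeight l) (hw' : IsWeight l')
    (ho' : IsOrdered l') (h0 : 1/2 < l 0) (h0' : 1/2 < l' 0)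
    (h : rhoBD l ∈ RR ρ)
    (m1 : l' 0 ≤ l 0)
    (m2 : (1 - 2 * l' 1) * (l 2 + l 3) ≤ (1 - 2 * l 1) * (l' 2 + l' 3))
    (m3 : (1 - 2 * l' 1 - 2 * l' 2) * l 3 ≤ (1 - 2 * l 1 - 2 * l 2) * l' 3) :
    rhoBD l' ∈ RR ρ := by
  obtain ⟨hn, hs⟩ := hw
  obtain ⟨hn', hs'⟩ := hw'
  obtain ⟨o1, o2, o3⟩ := ho'
  rw [Fin.sum_univ_four] at hs hs'
  have hSR := SS_le_RR hρ
  set K' := 2 * l' 0 - 1 with hK'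
  set K := 2 * l 0 - 1 with hK
  have Kp : 0 < K := by linarith
  have Kp' : 0 < K' := by linarith
  have ex : ∀ r : ℝ, ∀ q : ℝ, q * K ≤ r * K → q ≤ r := fun r q hh => le_of_mul_le_mul_right hh Kp
  have t0 : 0 ≤ K' / K := by positivity
  have tK : K' / K * K = K' := by field_simp
  have e0 : l 0 = 1 - l 1 - l 2 - l 3 := by linarith
  have e0' : l' 0 = 1 - l' 1 - l' 2 - l' 3 := by linarith
  have key := maj (fun x y z => rhoBD ![K' + x + y + z, x, y, z] ∈ RR ρ)
    (by
      intro x y z hG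
      have := RR_trans hG (swap23 _ _ _ _)
      rwa [show K' + y + x + z = K' + x + y + z by ring])
    (by
      intro x y z hG
      have := RR_trans hG (swap34 _ _ _ _)
      rwa [show K' + x + z + y = K' + x + y + z by ring])
    (by
      intro x y z x' y' z' s hG hG' hs0 hs1
      have := add_mem (RR_smul hG (1 - s) (by linarith)) (RR_smul hG' s hs0)
      rw [← rhoBD_smul, ← rhoBD_smul, ← rhoBD_add] at this
      convert this using 2
      ext i; fin_cases i <;> simp
      ring)
    (by
      intro x y z x' y' z' hG hx hy hz
      have := add_mem (add_mem (add_mem hG (RR_smul (hSR sep12) (x' - x) (by linarith)))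
        (RR_smul (hSR sep13) (y' - y) (by linarith))) (RR_smul (hSR sep14) (z' - z) (by linarith))
      rw [← rhoBD_smul, ← rhoBD_smul, ← rhoBD_smul, ← rhoBD_add, ← rhoBD_add, ← rhoBD_add] at this
      convert this using 2
      ext i; fin_cases i <;> simp
      ring)
    (K' / K * l 1) (K' / K * l 2) (K' / K * l 3) (l' 1) (l' 2) (l' 3) o2 o3
    (by
      apply ex
      rw [show K' / K * l 3 * K = K' * l 3 by linear_combination l 3 * tK, hK, hK', e0, e0']
      linarith)
    (by
      apply ex
      rw [show (K' / K * l 2 + K' / K * l 3) * K = K' * (l 2 + l 3) by linear_combination (l 2 + l 3) * tK,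
        hK, hK', e0, e0']
      linarith)
    (by
      apply ex
      rw [show (K' / K * l 1 + K' / K * l 2 + K' / K * l 3) * K = K' * (l 1 + l 2 + l 3) by
        linear_combination (l 1 + l 2 + l 3) * tK]
      rw [show l 1 + l 2 + l 3 = 1 - l 0 by linarith,
        show l' 1 + l' 2 + l' 3 = 1 - l' 0 by linarith, hK, hK']
      linarith)
    (by
      have := RR_smul h (K' / K) t0
      rw [← rhoBD_smul] at this
      convert this using 2
      ext i; fin_cases i <;> simp
      rw [show l 0 = K + l 1 + l 2 + l 3 by linarith, mul_add, mul_add, mul_add, tK])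
  have e : l' = ![K' + l' 1 + l' 2 + l' 3, l' 1, l' 2, l' 3] := by
    ext i; fin_cases i <;> simp
    linarith
  rw [e]
  exact key

/-- let `λ, λ'` be ordered weight vectors such that `ρ` (resp. `ρ'`)
is SLOCC equivalent to `ρ_BD(λ)` (resp. `ρ_BD(λ')`) whenever it is entangled.
Then `ρ` can be transformed to `ρ'` by SLOCC iff either `ρ'` is separable, or both
are entangled and the three monotone inequalities `E_i(λ) ≥ E_i(λ')` hold. -/
theorem stmt18 (ρ ρ' : M4) (hρ : IsDensity ρ) (hρ' : IsDensity ρ')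
    (l l' : Fin 4 → ℝ) (hw : IsWeight l) (hw' : IsWeight l')
    (ho : IsOrdered l) (ho' : IsOrdered l')
    (hl : ¬ Sep2 ρ → SLOCCequiv ρ (rhoBD l))
    (hl' : ¬ Sep2 ρ' → SLOCCequiv ρ' (rhoBD l')) :
    SLOCCto ρ ρ' ↔
      (Sep2 ρ' ∨
        (¬ Sep2 ρ ∧ ¬ Sep2 ρ' ∧
          l' 0 ≤ l 0 ∧
          (1 - 2 * l' 1) * (l 2 + l 3) ≤ (1 - 2 * l 1) * (l' 2 + l' 3) ∧
          (1 - 2 * l' 1 - 2 * l' 2) * l 3 ≤ (1 - 2 * l 1 - 2 * l 2) * l' 3)) := by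
  rw [slocc_iff, sep_iff, sep_iff]
  simp only [sep_iff, SLOCCequiv, slocc_iff] at hl hl'
  have big : ∀ (σ : M4) (m : Fin 4 → ℝ), IsWeight m → IsOrdered m → σ ∉ SS →
      σ ∈ RR (rhoBD m) → 1/2 < m 0 := by
    intro σ m hm hmo hσ hr
    by_contra hc
    exact hσ (RR_le_SS (sep_small m hm hmo (not_lt.1 hc)) hr)
  constructor
  · intro h
    by_cases hs' : ρ' ∈ SS
    · exact Or.inl hs'
    right
    have hs : ρ ∉ SS := fun hc => hs' (RR_le_SS hc h)
    obtain ⟨a, b⟩ := hl hs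
    obtain ⟨a', b'⟩ := hl' hs'
    exact ⟨hs, hs', nec l l' hw hw' ho (big ρ l hw ho hs b) (RR_trans (RR_trans b h) a')⟩
  · rintro (h | ⟨hs, hs', m1, m2, m3⟩)
    · exact SS_le_RR hρ h
    · obtain ⟨a, b⟩ := hl hs
      obtain ⟨a', b'⟩ := hl' hs'
      exact RR_trans (suf ρ hρ l l' hw hw' ho' (big ρ l hw ho hs b) (big ρ' l' hw' ho' hs' b')
        a m1 m2 m3) b'

end Paper
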